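/- arXiv:0712.4399 — 2 statements merged into one kernel-verified Lean document; each statement's English description precedes it below -/
import Mathlib

section
/- Let f : ℤ → ℕ ∪ {∞} be any function for which f⁻¹(0) is a finite set, and let h ≥ 2 be an integer. Then there exists a subset A ⊆ ℤ such that for every n ∈ ℤ, the number of tuples (x₁,…,x_h) ∈ A^h with x₁ ≤ x₂ ≤ ⋯ ≤ x_h and x₁ + x₂ + ⋯ + x_h = n equals f(n). -/
namespace NathansonProof

/-- Multisets of size `k` over `A` with sum `n`. -/
def R (A : Set ℤ) (k : ℕ) (n : ℤ) : Set (Multiset ℤ) :=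
  {s | s.card = k ∧ (∀ x ∈ s, x ∈ A) ∧ s.sum = n}

/-- The invariant of the construction. -/
def Good (f : ℤ → ℕ∞) (h : ℕ) (A : Set ℤ) : Prop :=
  A.Finite ∧ (∀ s t : Multiset ℤ, s.card < h → s.card = t.card → (∀ x ∈ s, x ∈ A) →
    (∀ x ∈ t, x ∈ A) → s.sum = t.sum → s = t) ∧ ∀ n, (R A h n).encard ≤ f n

lemma R_mono {A B : Set ℤ} (hAB : A ⊆ B) (k : ℕ) (n : ℤ) : R A k n ⊆ R B k n :=
  fun _ hs => ⟨hs.1, fun x hx => hAB (hs.2.1 x hx), hs.2.2⟩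

lemma decomp (A : Set ℤ) (x y : ℤ) (s : Multiset ℤ) (hs : ∀ z ∈ s, z ∈ A ∪ {x, y}) :
    ∃ (i j : ℕ) (s' : Multiset ℤ), s = Multiset.replicate i x + Multiset.replicate j y + s' ∧
      ∀ z ∈ s', z ∈ A := by
  induction s using Multiset.induction with
  | empty => exact ⟨0, 0, 0, by simp, by simp⟩
  | cons a s ih =>
    obtain ⟨i, j, s', rfl, h'⟩ := ih (fun z hz => hs z (Multiset.mem_cons_of_mem hz))
    rcases hs a (Multiset.mem_cons_self _ _) with ha | ha | ha
    · refine ⟨i, j, a ::ₘ s', by simp, ?_⟩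
      intro z hz
      rcases Multiset.mem_cons.1 hz with rfl | hz
      · exact ha
      · exact h' z hz
    · subst ha
      exact ⟨i + 1, j, s', by simp [Multiset.replicate_succ], h'⟩
    · have ha : a = y := ha
      subst ha
      exact ⟨i, j + 1, s', by simp [Multiset.replicate_succ], h'⟩

lemma sum_bound (A : Set ℤ) (M : ℤ) (hM : ∀ a ∈ A, |a| ≤ M) (s : Multiset ℤ)
    (hs : ∀ z ∈ s, z ∈ A) : |s.sum| ≤ s.card * M := by
  induction s using Multiset.induction with
  | empty => simp
  | cons a s ih =>
    have h1 := ih (fun z hz => hs z (Multiset.mem_cons_of_mem hz))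
    have h2 := hM a (hs a (Multiset.mem_cons_self _ _))
    have h3 := abs_add_le a s.sum
    simp only [Multiset.sum_cons, Multiset.card_cons]
    push_cast
    linarith

lemma coef_lt (g i j i' j' : ℕ) (hg : 1 ≤ g) (h1 : i + j ≤ g + 1) (hlt : j' < j)
    (he : (g : ℤ) * j - i = g * j' - i') : i' = 0 ∧ j' = 0 ∧ i = g ∧ j = 1 := by
  obtain ⟨d, rfl⟩ := Nat.exists_eq_add_of_lt hlt
  have he' : (g : ℤ) * (d + 1) + i' = i := by push_cast at he; linarith
  have he2 : g * d + g + i' = i := by zify; linarith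
  have : d = 0 := by
    by_contra hd
    have : g * 1 ≤ g * d := Nat.mul_le_mul_left _ (by omega)
    omega
  subst this
  omega

lemma coef (g i j i' j' : ℕ) (hg : 1 ≤ g) (h1 : i + j ≤ g + 1) (h2 : i' + j' ≤ g + 1)
    (he : (g : ℤ) * j - i = g * j' - i') :
    (i = i' ∧ j = j') ∨ (i' = 0 ∧ j' = 0 ∧ i = g ∧ j = 1) ∨
      (i = 0 ∧ j = 0 ∧ i' = g ∧ j' = 1) := by
  rcases lt_trichotomy j j' with hlt | rfl | hlt
  · right; right; exact coef_lt g i' j' i j hg h2 hlt he.symm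
  · left; exact ⟨by omega, rfl⟩
  · right; left; exact coef_lt g i j i' j' hg h1 hlt he

lemma sep (c B L L' r r' : ℤ) (hc : 2 * B < c) (hr : |r| ≤ B) (hr' : |r'| ≤ B)
    (he : c * L + r = c * L' + r') : L = L' ∧ r = r' := by
  rw [abs_le] at hr hr'
  have hL : L = L' := by
    rcases lt_trichotomy L L' with hl | hl | hl
    · nlinarith
    · exact hl
    · nlinarith
  subst hL
  exact ⟨rfl, by linarith⟩

lemma step (f : ℤ → ℕ∞) (hf : {n : ℤ | f n = 0}.Finite) (g : ℕ) (hg : 1 ≤ g) (A : Set ℤ)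
    (hA : Good f (g + 1) A) (n : ℤ) (hn : (R A (g + 1) n).encard < f n) :
    ∃ A', A ⊆ A' ∧ Good f (g + 1) A' ∧
      (R A (g + 1) n).encard + 1 ≤ (R A' (g + 1) n).encard := by
  obtain ⟨hfin, hB, hle⟩ := hA
  obtain ⟨M, hM⟩ : ∃ M : ℤ, ∀ a ∈ A ∪ {n : ℤ | f n = 0} ∪ {n, 1}, |a| ≤ M := by
    have h1 : (A ∪ {n : ℤ | f n = 0} ∪ {n, 1}).Finite := (hfin.union hf).union (by simp)
    obtain ⟨M, hM⟩ := (h1.image (fun a => |a|)).bddAbove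
    exact ⟨M, fun a ha => hM ⟨a, ha, rfl⟩⟩
  have hMA : ∀ a ∈ A, |a| ≤ M := fun a ha => hM a (by simp [ha])
  have hMf : ∀ a, f a = 0 → |a| ≤ M := fun a ha => hM a (by simp [ha])
  have hMn : |n| ≤ M := hM n (by simp)
  have hM1 : 1 ≤ M := by simpa using hM 1 (by simp)
  set B : ℤ := (g + 1) * M with hBdef
  have hBM : M ≤ B := by nlinarith
  obtain ⟨c, hc⟩ : ∃ c : ℤ, 2 * B < c := ⟨2 * B + 1, by linarith⟩
  set x : ℤ := -c with hx
  set y : ℤ := n + g * c with hy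
  have hxA : x ∉ A := by
    intro hxA
    have := hMA x hxA
    rw [abs_le] at this
    linarith
  -- the key dichotomy
  have sumf : ∀ (i j : ℕ) (s : Multiset ℤ),
      (Multiset.replicate i x + Multiset.replicate j y + s).sum =
        c * ((g : ℤ) * j - i) + (s.sum + n * j) := by
    intro i j s
    simp only [Multiset.sum_add, Multiset.sum_replicate, nsmul_eq_mul, hx, hy]
    ring
  have remb : ∀ (i j : ℕ) (s : Multiset ℤ), (∀ z ∈ s, z ∈ A) → i + j + s.card ≤ g + 1 →
      |s.sum + n * j| ≤ B := by
    intro i j s hs hcard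
    have h1 := sum_bound A M hMA s hs
    have h2 : |n * (j : ℤ)| ≤ M * j := by
      rw [abs_mul, Nat.abs_cast]
      exact mul_le_mul_of_nonneg_right hMn (by positivity)
    have h3 := abs_add_le s.sum (n * j)
    have h4 : ((j : ℤ) + s.card) ≤ g + 1 := by exact_mod_cast (by omega : j + s.card ≤ g + 1)
    have h5 : ((j : ℤ) + s.card) * M ≤ (g + 1) * M :=
      mul_le_mul_of_nonneg_right h4 (by linarith)
    linarith
  have key : ∀ (i j i' j' : ℕ) (s t : Multiset ℤ), (∀ z ∈ s, z ∈ A) → (∀ z ∈ t, z ∈ A) →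
      i + j + s.card ≤ g + 1 → i + j + s.card = i' + j' + t.card →
      (Multiset.replicate i x + Multiset.replicate j y + s).sum =
      (Multiset.replicate i' x + Multiset.replicate j' y + t).sum →
      (i = i' ∧ j = j' ∧ (s.card < g + 1 → s = t)) ∨ (i' = 0 ∧ j' = 0 ∧ i = g ∧ j = 1) ∨
      (i = 0 ∧ j = 0 ∧ i' = g ∧ j' = 1) := by
    intro i j i' j' s t hs ht hc1 hc2 he
    rw [sumf, sumf] at he
    obtain ⟨hL, hr⟩ := sep c B _ _ _ _ hc (remb i j s hs hc1) (remb i' j' t ht (by omega)) he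
    rcases coef g i j i' j' hg (by omega) (by omega) hL with ⟨rfl, rfl⟩ | h | h
    · left
      exact ⟨rfl, rfl, fun hlt => hB s t hlt (by omega) hs ht (by linarith)⟩
    · right; left; exact h
    · right; right; exact h
  refine ⟨A ∪ {x, y}, Set.subset_union_left, ⟨hfin.union (by simp), ?_, ?_⟩, ?_⟩
  · intro s t hs hst hsA htA he
    obtain ⟨i, j, s', rfl, hs'⟩ := decomp A x y s hsA
    obtain ⟨i', j', t', rfl, ht'⟩ := decomp A x y t htA
    simp only [Multiset.card_add, Multiset.card_replicate] at hs hst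
    rcases key i j i' j' s' t' hs' ht' (by omega) hst he with ⟨rfl, rfl, h⟩ | h | h
    · rw [h (by omega)]
    · omega
    · omega
  · intro m
    by_cases hsub : R (A ∪ {x, y}) (g + 1) m ⊆ R A (g + 1) m
    · exact (Set.encard_le_encard hsub).trans (hle m)
    obtain ⟨s, hs, hsn⟩ := Set.not_subset.1 hsub
    obtain ⟨hs1, hs2, hs3⟩ := hs
    obtain ⟨i, j, s', rfl, hs'⟩ := decomp A x y s hs2
    have hij : ¬ (i = 0 ∧ j = 0) := by
      rintro ⟨rfl, rfl⟩
      apply hsn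
      exact ⟨hs1, by simpa using hs', hs3⟩
    simp only [Multiset.card_add, Multiset.card_replicate] at hs1
    by_cases hij2 : i = g ∧ j = 1
    · obtain ⟨rfl, rfl⟩ := hij2
      have hs0 : s' = 0 := by rw [← Multiset.card_eq_zero]; omega
      subst hs0
      have hmn : m = n := by rw [← hs3, sumf]; simp
      subst hmn
      have hsub2 : R (A ∪ {x, y}) (i + 1) m ⊆
          insert (Multiset.replicate i x + Multiset.replicate 1 y + 0) (R A (i + 1) m) := by
        rintro t ⟨ht1, ht2, ht3⟩
        obtain ⟨i', j', t', rfl, ht'⟩ := decomp A x y t ht2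
        have ht1' := ht1
        simp only [Multiset.card_add, Multiset.card_replicate] at ht1'
        rcases key i 1 i' j' 0 t' hs' ht' (by simp) (by simp; omega) (by rw [hs3, ht3])
          with ⟨rfl, rfl, h⟩ | h | h
        · left
          rw [h (by simp)]
        · right
          obtain ⟨rfl, rfl, -⟩ := h
          exact ⟨ht1, by simpa using ht', ht3⟩
        · omega
      refine (Set.encard_le_encard hsub2).trans ((Set.encard_insert_le _ _).trans ?_)
      exact Order.add_one_le_of_lt hn
    · have hsub2 : R (A ∪ {x, y}) (g + 1) m ⊆
          {Multiset.replicate i x + Multiset.replicate j y + s'} := by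
        rintro t ⟨ht1, ht2, ht3⟩
        obtain ⟨i', j', t', rfl, ht'⟩ := decomp A x y t ht2
        simp only [Multiset.card_add, Multiset.card_replicate] at ht1
        rcases key i j i' j' s' t' hs' ht' (by omega) (by omega) (by rw [hs3, ht3])
          with ⟨rfl, rfl, h⟩ | h | h
        · rw [h (by omega)]; rfl
        · omega
        · omega
      refine (Set.encard_le_encard hsub2).trans ?_
      rw [Set.encard_singleton, Order.one_le_iff_ne_zero]
      intro hfm
      have h1 := hMf m hfm
      have h2 := remb i j s' hs' (by omega)
      rw [sumf] at hs3
      have h3 := sep c B ((g : ℤ) * j - i) 0 (s'.sum + n * j) m hc h2 (by linarith)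
        (by linarith)
      rcases coef g i j 0 0 hg (by omega) (by omega) (by simpa using h3.1) with h | h | h
      · exact hij h
      · exact hij2 h.2.2
      · omega
  · have hnot : (Multiset.replicate g x + Multiset.replicate 1 y + 0) ∉ R A (g + 1) n := by
      rintro ⟨-, h2, -⟩
      apply hxA
      apply h2
      simp [Multiset.mem_replicate]
      omega
    rw [← Set.encard_insert_of_notMem hnot]
    apply Set.encard_le_encard
    apply Set.insert_subset _ (R_mono Set.subset_union_left _ _)
    refine ⟨by simp, ?_, ?_⟩
    · intro z hz
      simp [Multiset.mem_replicate] at hz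
      rcases hz with hz | hz
      · simp [hz.2]
      · simp [hz]
    · rw [sumf]; simp

lemma steps (f : ℤ → ℕ∞) (hf : {n : ℤ | f n = 0}.Finite) (g : ℕ) (hg : 1 ≤ g) (A : Set ℤ)
    (hA : Good f (g + 1) A) (n : ℤ) (j : ℕ) :
    ∃ A', A ⊆ A' ∧ Good f (g + 1) A' ∧
      ((j : ℕ∞) ≤ f n → (j : ℕ∞) ≤ (R A' (g + 1) n).encard) := by
  induction j with
  | zero => exact ⟨A, subset_rfl, hA, by simp⟩
  | succ j ih =>
    obtain ⟨A1, h1, h2, h3⟩ := ih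
    by_cases hj : ((j + 1 : ℕ) : ℕ∞) ≤ f n
    · have h4 := h3 (le_trans (by exact_mod_cast Nat.le_succ j) hj)
      by_cases hlt : (R A1 (g + 1) n).encard < f n
      · obtain ⟨A2, h5, h6, h7⟩ := step f hf g hg A1 h2 n hlt
        refine ⟨A2, h1.trans h5, h6, fun _ => le_trans ?_ h7⟩
        push_cast
        gcongr
      · exact ⟨A1, h1, h2, fun _ => hj.trans (not_lt.1 hlt)⟩
    · exact ⟨A1, h1, h2, fun h => absurd h hj⟩

lemma exists_set (f : ℤ → ℕ∞) (hf : {n : ℤ | f n = 0}.Finite) (g : ℕ) (hg : 1 ≤ g) :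
    ∃ A : Set ℤ, ∀ n, (R A (g + 1) n).encard = f n := by
  have h0 : Good f (g + 1) ∅ := by
    refine ⟨Set.finite_empty, ?_, ?_⟩
    · intro s t _ _ hs ht _
      rw [Multiset.eq_zero_of_forall_notMem hs, Multiset.eq_zero_of_forall_notMem ht]
    · intro n
      have : R ∅ (g + 1) n = ∅ := by
        ext s
        simp only [Set.mem_empty_iff_false, iff_false]
        rintro ⟨h1, h2, -⟩
        rw [Multiset.eq_zero_of_forall_notMem h2] at h1
        simp at h1
      simp [this]
  choose F hF1 hF2 hF3 using steps f hf g hg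
  obtain ⟨e, he⟩ := exists_surjective_nat (ℤ × ℕ)
  let S : ℕ → {A : Set ℤ // Good f (g + 1) A} := fun k => Nat.rec ⟨∅, h0⟩
    (fun k A => ⟨F A.1 A.2 (e k).1 (e k).2, hF2 A.1 A.2 _ _⟩) k
  have hS : ∀ k, (S (k + 1)).1 = F (S k).1 (S k).2 (e k).1 (e k).2 := fun k => rfl
  have hmono : Monotone (fun k => (S k).1) :=
    monotone_nat_of_le_succ (fun k => by rw [hS]; exact hF1 _ _ _ _)
  refine ⟨⋃ k, (S k).1, fun n => le_antisymm ?_ ?_⟩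
  · by_contra hcon
    rw [not_le] at hcon
    obtain ⟨T, hT1, hT2⟩ := Set.exists_subset_encard_eq (Order.add_one_le_of_lt hcon)
    have hfn : f n ≠ ⊤ := ne_top_of_lt hcon
    have hTfin : T.Finite := by
      rw [← Set.encard_ne_top_iff, hT2]
      simpa using hfn
    have hpt : ∀ s ∈ T, ∃ k, ∀ z ∈ s, z ∈ (S k).1 := by
      intro s hs
      have := (hT1 hs).2.1
      clear hs
      induction s using Multiset.induction with
      | empty => exact ⟨0, by simp⟩
      | cons a s ih =>
        obtain ⟨k, hk⟩ := ih (fun z hz => this z (Multiset.mem_cons_of_mem hz))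
        obtain ⟨l, hl⟩ := Set.mem_iUnion.1 (this a (Multiset.mem_cons_self _ _))
        refine ⟨max k l, fun z hz => ?_⟩
        rcases Multiset.mem_cons.1 hz with rfl | hz
        · exact hmono (le_max_right k l) hl
        · exact hmono (le_max_left k l) (hk z hz)
    choose! K hK using hpt
    obtain ⟨N, hN⟩ := (hTfin.image K).bddAbove
    have hsub : T ⊆ R (S N).1 (g + 1) n := by
      intro s hs
      refine ⟨(hT1 hs).1, fun z hz => ?_, (hT1 hs).2.2⟩
      exact hmono (hN ⟨s, hs, rfl⟩) (hK s hs z hz)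
    have h1 := (Set.encard_le_encard hsub).trans ((S N).2.2.2 n)
    rw [hT2] at h1
    exact absurd (ENat.lt_add_one_iff hfn |>.2 le_rfl) (not_lt.2 h1)
  · refine ENat.forall_natCast_le_iff_le.1 fun j hj => ?_
    obtain ⟨k, hk⟩ := he (n, j)
    have h1 := hF3 (S k).1 (S k).2 (e k).1 (e k).2
    rw [← hS, hk] at h1
    exact (h1 hj).trans (Set.encard_le_encard (R_mono (Set.subset_iUnion (fun k => (S k).1) (k + 1)) (g + 1) n))

lemma tuples (A : Set ℤ) (h : ℕ) (n : ℤ) :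
    Set.encard {x : Fin h → ℤ | (∀ i, x i ∈ A) ∧ Monotone x ∧ (∑ i, x i) = n} =
      (R A h n).encard := by
  have hinj : Set.InjOn (fun x : Fin h → ℤ => ((List.ofFn x : List ℤ) : Multiset ℤ))
      {x : Fin h → ℤ | (∀ i, x i ∈ A) ∧ Monotone x ∧ (∑ i, x i) = n} := by
    intro x hx y hy hxy
    have hp : (List.ofFn x).Perm (List.ofFn y) := Multiset.coe_eq_coe.1 hxy
    exact List.ofFn_injective (hp.eq_of_sortedLE hx.2.1.sortedLE_ofFn hy.2.1.sortedLE_ofFn)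
  rw [← hinj.encard_image]
  congr 1
  ext s
  constructor
  · rintro ⟨x, ⟨h1, h2, h3⟩, rfl⟩
    refine ⟨by simp, ?_, ?_⟩
    · intro z hz
      simp only [Multiset.mem_coe, List.mem_ofFn] at hz
      obtain ⟨i, rfl⟩ := hz
      exact h1 i
    · simp [List.sum_ofFn, h3]
  · rintro ⟨rfl, h2, rfl⟩
    have hl : (s.sort (· ≤ ·)).length = s.card := by simp
    have hof : List.ofFn (fun i : Fin s.card => (s.sort (· ≤ ·)).get (i.cast hl.symm)) =
        s.sort (· ≤ ·) := by
      apply List.ext_get <;> simp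
    refine ⟨fun i => (s.sort (· ≤ ·)).get (i.cast hl.symm), ⟨?_, ?_, ?_⟩, ?_⟩
    · intro i
      apply h2
      rw [← Multiset.mem_sort (r := (· ≤ ·))]
      exact List.get_mem _ _
    · rw [← List.sortedLE_ofFn_iff, hof]
      exact (s.pairwise_sort (· ≤ ·)).sortedLE
    · rw [← List.sum_ofFn, hof, ← Multiset.sum_coe, Multiset.sort_eq]
    · simp only [hof, Multiset.sort_eq]

end NathansonProof

theorem nathanson_unordered_representation
    (f : ℤ → ℕ∞) (hf : {n : ℤ | f n = 0}.Finite) (h : ℕ) (hh : 2 ≤ h) :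
    ∃ A : Set ℤ, ∀ n : ℤ,
      Set.encard {x : Fin h → ℤ | (∀ i, x i ∈ A) ∧ Monotone x ∧ (∑ i, x i) = n} = f n := by
  obtain ⟨g, rfl⟩ : ∃ g, h = g + 1 := ⟨h - 1, by omega⟩
  obtain ⟨A, hA⟩ := NathansonProof.exists_set f hf g (by omega)
  exact ⟨A, fun n => by rw [NathansonProof.tuples, hA]⟩
end

section
/- Let 𝓛₀ denote the linear form x₁ − x₂. Let A ⊆ ℤ and suppose that for some n ∈ ℤ with n ≠ 0 we have f_{A,𝓛₀}(n) ≥ 3. Then there exists m ∈ ℤ with m ∉ {0, n, −n} such that f_{A,𝓛₀}(m) ≥ 2. -/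
/-- The representation function of `A ⊆ ℤ` for the form `𝓛₀ : x₁ - x₂`: the
number (in `ℕ∞`) of equivalence classes of representations of `n`, where
representations `(x₁, x₂)` and `(y₁, y₂)` of `n` are equivalent iff for every
`ξ ∈ ℤ`, `∑_{i : x_i = ξ} a_i = ∑_{i : y_i = ξ} a_i` with `(a₁, a₂) = (1, -1)`.
Equivalence classes are identified with the functions `g : ℤ → ℤ`,
`g ξ = [x₁ = ξ] - [x₂ = ξ]`. -/
noncomputable def diffRep (A : Set ℤ) (n : ℤ) : ℕ∞ :=
  Set.encard { g : ℤ → ℤ | ∃ x y : ℤ, x ∈ A ∧ y ∈ A ∧ x - y = n ∧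
    ∀ ξ : ℤ, g ξ = (if x = ξ then (1 : ℤ) else 0) + (if y = ξ then (-1 : ℤ) else 0) }

theorem two_le_diffRep_aux (A : Set ℤ) (n : ℤ) (hn : n ≠ 0) (a b : ℤ) (hab : a ≠ b)
    (ha : a ∈ A) (hb : b ∈ A) (ha' : a + n ∈ A) (hb' : b + n ∈ A) :
    2 ≤ diffRep A (a - b) := by
  have h : 1 < diffRep A (a - b) := by
    unfold diffRep
    rw [Set.one_lt_encard_iff]
    refine ⟨_, _, ⟨a, b, ha, hb, rfl, fun ξ => rfl⟩,
      ⟨a + n, b + n, ha', hb', by ring, fun ξ => rfl⟩, ?_⟩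
    intro h
    have h1 := congrFun h (a + n)
    simp only at h1
    split_ifs at h1 <;> omega
  have := Order.add_one_le_of_lt h
  rwa [one_add_one_eq_two] at this

theorem three_representations_force_another
    (A : Set ℤ) (n : ℤ) (hn : n ≠ 0) (h3 : 3 ≤ diffRep A n) :
    ∃ m : ℤ, m ∉ ({0, n, -n} : Set ℤ) ∧ 2 ≤ diffRep A m := by
  unfold diffRep at h3
  obtain ⟨t, hts, ht⟩ := Set.exists_subset_encard_eq h3
  obtain ⟨g₁, g₂, g₃, h12, h13, h23, rfl⟩ := Set.encard_eq_three.1 ht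
  obtain ⟨x₁, y₁, hx₁, hy₁, e₁, hg₁⟩ := hts (show g₁ ∈ _ by simp)
  obtain ⟨x₂, y₂, hx₂, hy₂, e₂, hg₂⟩ := hts (show g₂ ∈ _ by simp)
  obtain ⟨x₃, y₃, hx₃, hy₃, e₃, hg₃⟩ := hts (show g₃ ∈ _ by simp)
  obtain rfl : x₁ = y₁ + n := by omega
  obtain rfl : x₂ = y₂ + n := by omega
  obtain rfl : x₃ = y₃ + n := by omega
  have n12 : y₁ ≠ y₂ := by
    rintro rfl
    exact h12 (funext fun ξ => by rw [hg₁, hg₂])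
  have n13 : y₁ ≠ y₃ := by
    rintro rfl
    exact h13 (funext fun ξ => by rw [hg₁, hg₃])
  have n23 : y₂ ≠ y₃ := by
    rintro rfl
    exact h23 (funext fun ξ => by rw [hg₂, hg₃])
  by_cases c12 : y₁ - y₂ = n ∨ y₁ - y₂ = -n
  · by_cases c13 : y₁ - y₃ = n ∨ y₁ - y₃ = -n
    · refine ⟨y₂ - y₃, ?_, two_le_diffRep_aux A n hn _ _ n23 hy₂ hy₃ hx₂ hx₃⟩
      simp only [Set.mem_insert_iff, Set.mem_singleton_iff]
      omega
    · refine ⟨y₁ - y₃, ?_, two_le_diffRep_aux A n hn _ _ n13 hy₁ hy₃ hx₁ hx₃⟩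
      simp only [Set.mem_insert_iff, Set.mem_singleton_iff]
      omega
  · refine ⟨y₁ - y₂, ?_, two_le_diffRep_aux A n hn _ _ n12 hy₁ hy₂ hx₁ hx₂⟩
    simp only [Set.mem_insert_iff, Set.mem_singleton_iff]
    omega
end
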